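/- arXiv:1007.4621 — 2 statements merged into one kernel-verified Lean document; each statement's English description precedes it below -/
import Mathlib

section
/- For every prime power q, one has h(1) · h(3) < h(2)^2. -/
/-!
The inequality follows from a termwise comparison that leaves room to spare. Put `x = |P|⁻¹ ≤ 1/2`.
In the term `u - v = -log (1 - x²)` of `h(1)` the first powers of `x` cancel, so it is at most
`4/3 * x²`, hence at most `4/3` times the term `u² + v²` of `h(2)`, since `x ≤ u`. In the term
`u³ - v³ ≤ 3/2 * (u - v) * (u² + v²)` of `h(3)` the factor `u - v` is at most `1/3`, so it is at
most half the term of `h(2)`. Therefore `h(1) h(3) ≤ 2/3 * h(2)²`. The series converge because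
`u² + v² ≤ 8 * x²` and there are `q^d` monic polynomials of degree `d`.
-/

open Polynomial

/-- `u_P = -log(1 - |P|⁻¹)` where `|P| = q^(deg P)`. -/
noncomputable def uP {Fq : Type} [Field Fq] [Fintype Fq] (P : Polynomial Fq) : ℝ :=
  -Real.log (1 - ((Fintype.card Fq : ℝ) ^ P.natDegree)⁻¹)

/-- `v_P = log(1 + |P|⁻¹)` where `|P| = q^(deg P)`. -/
noncomputable def vP {Fq : Type} [Field Fq] [Fintype Fq] (P : Polynomial Fq) : ℝ :=
  Real.log (1 + ((Fintype.card Fq : ℝ) ^ P.natDegree)⁻¹)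

/-- `h(λ) = ∑_P (u_P^λ + (-1)^λ v_P^λ)`, the sum over all monic irreducible
polynomials `P ∈ Fq[X]`. -/
noncomputable def hfun (Fq : Type) [Field Fq] [Fintype Fq] (l : ℕ) : ℝ :=
  ∑' P : {P : Polynomial Fq // P.Monic ∧ Irreducible P},
    (uP P.1 ^ l + (-1 : ℝ) ^ l * vP P.1 ^ l)

section Monic

variable {R : Type*} [Ring R] [Nontrivial R]

lemma natCard_monic_natDegree_eq (n : ℕ) :
    Nat.card {P : R[X] // P.Monic ∧ P.natDegree = n} = Nat.card R ^ n := by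
  rw [Nat.card_congr ((monicEquivDegreeLT n).trans (degreeLTEquiv R n).toEquiv), Nat.card_fun,
    Nat.card_fin]

lemma summable_pow_natDegree_of_monic [Finite R] {r : ℝ} (hr₀ : 0 ≤ r) (hr : Nat.card R * r < 1) :
    Summable fun P : {P : R[X] // P.Monic} ↦ r ^ P.1.natDegree := by
  let fiber (n : ℕ) : Set {P : R[X] // P.Monic} := {P | P.1.natDegree = n}
  have card_fiber (n : ℕ) : Nat.card (fiber n) = Nat.card R ^ n :=
    (Nat.card_congr (Equiv.subtypeSubtypeEquivSubtypeInter _ _)).trans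
      (natCard_monic_natDegree_eq n)
  have finite_fiber (n : ℕ) : Finite (fiber n) :=
    Nat.finite_of_card_ne_zero (card_fiber n ▸ pow_ne_zero n Nat.card_pos.ne')
  have tsum_fiber (n : ℕ) :
      ∑' P : fiber n, r ^ P.1.1.natDegree = (Nat.card R * r) ^ n := by
    calc ∑' P : fiber n, r ^ P.1.1.natDegree = ∑' _ : fiber n, r ^ n :=
          tsum_congr fun P ↦ congrArg (r ^ ·) P.2
      _ = (Nat.card R * r) ^ n := by
          rw [tsum_const, card_fiber, nsmul_eq_mul, Nat.cast_pow, mul_pow]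
  refine (summable_partition (fun P ↦ pow_nonneg hr₀ _) (s := fiber)
    fun P ↦ ⟨P.1.natDegree, rfl, fun _ h ↦ h.symm⟩).2 ⟨fun n ↦ Summable.of_finite, ?_⟩
  simpa only [tsum_fiber] using summable_geometric_of_lt_one (by positivity) hr

end Monic

lemma neg_log_one_sub_le_div {x : ℝ} (hx : x < 1) : -Real.log (1 - x) ≤ x / (1 - x) := by
  have hpos : 0 < 1 - x := sub_pos.2 hx
  calc -Real.log (1 - x) ≤ (1 - x)⁻¹ - 1 := by linarith [Real.one_sub_inv_le_log_of_pos hpos]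
    _ = x / (1 - x) := by
        field_simp
        ring

lemma neg_log_one_sub_le_mul {x c : ℝ} (hx₀ : 0 ≤ x) (hx : x < 1) (hc : 1 ≤ c * (1 - x)) :
    -Real.log (1 - x) ≤ c * x := by
  refine (neg_log_one_sub_le_div hx).trans ((div_le_iff₀ (sub_pos.2 hx)).2 ?_)
  nlinarith [mul_le_mul_of_nonneg_left hc hx₀]

lemma cube_sub_cube_le {u v : ℝ} (huv : v ≤ u) :
    u ^ 3 - v ^ 3 ≤ 3 / 2 * (u - v) * (u ^ 2 + v ^ 2) := by
  have hmul : u * v ≤ (u ^ 2 + v ^ 2) / 2 := by linarith [two_mul_le_add_sq u v]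
  calc u ^ 3 - v ^ 3 = (u - v) * (u ^ 2 + v ^ 2 + u * v) := by ring
    _ ≤ (u - v) * (u ^ 2 + v ^ 2 + (u ^ 2 + v ^ 2) / 2) := by
        gcongr
    _ = 3 / 2 * (u - v) * (u ^ 2 + v ^ 2) := by ring

section Terms

variable {Fq : Type} [Field Fq] [Fintype Fq]

/-- The inverse norm `|P|⁻¹ = q^(-deg P)`, so that `uP P = -log (1 - normInv P)` and
`vP P = log (1 + normInv P)`. -/
noncomputable def normInv (P : Fq[X]) : ℝ :=
  ((Fintype.card Fq : ℝ) ^ P.natDegree)⁻¹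

/-- The term `u_P^λ + (-1)^λ v_P^λ` of the series `h(λ)`. -/
noncomputable def hTerm (l : ℕ) (P : Fq[X]) : ℝ :=
  uP P ^ l + (-1 : ℝ) ^ l * vP P ^ l

lemma uP_eq_neg_log (P : Fq[X]) : uP P = -Real.log (1 - normInv P) := rfl

lemma vP_eq_log (P : Fq[X]) : vP P = Real.log (1 + normInv P) := rfl

lemma normInv_pos (P : Fq[X]) : 0 < normInv P := by
  unfold normInv
  positivity

variable {P : Fq[X]}

lemma normInv_le_half (hP : P.natDegree ≠ 0) : normInv P ≤ 1 / 2 := by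
  have hq : (2 : ℝ) ≤ Fintype.card Fq := by exact_mod_cast Fintype.one_lt_card
  rw [one_div]
  exact inv_anti₀ two_pos (hq.trans (le_self_pow₀ (one_le_two.trans hq) hP))

lemma normInv_le_uP (hP : P.natDegree ≠ 0) : normInv P ≤ uP P := by
  have hpos : 0 < 1 - normInv P := by linarith [normInv_le_half hP]
  have hlog : Real.log (1 - normInv P) ≤ 1 - normInv P - 1 := Real.log_le_sub_one_of_pos hpos
  rw [uP_eq_neg_log]
  linarith

lemma uP_le_two_mul_normInv (hP : P.natDegree ≠ 0) : uP P ≤ 2 * normInv P := by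
  have hx := normInv_le_half hP
  rw [uP_eq_neg_log]
  exact neg_log_one_sub_le_mul (normInv_pos P).le (by linarith) (by linarith)

lemma vP_pos (P : Fq[X]) : 0 < vP P := by
  rw [vP_eq_log]
  exact Real.log_pos (lt_add_of_pos_right 1 (normInv_pos P))

lemma normInv_sq_le (hP : P.natDegree ≠ 0) : normInv P ^ 2 ≤ 1 / 4 :=
  (pow_le_pow_left₀ (normInv_pos P).le (normInv_le_half hP) 2).trans_eq (by norm_num)

lemma uP_sub_vP (hP : P.natDegree ≠ 0) : uP P - vP P = -Real.log (1 - normInv P ^ 2) := by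
  have hx := normInv_le_half hP
  have hx₀ := normInv_pos P
  rw [uP_eq_neg_log, vP_eq_log, ← neg_add', ← Real.log_mul (by linarith) (by linarith)]
  ring_nf

lemma vP_lt_uP (hP : P.natDegree ≠ 0) : vP P < uP P := by
  have hx := normInv_sq_le hP
  have hx₀ : 0 < normInv P ^ 2 := pow_pos (normInv_pos P) 2
  rw [← sub_pos, uP_sub_vP hP, neg_pos]
  exact Real.log_neg (by linarith) (by linarith)

lemma uP_sub_vP_le (hP : P.natDegree ≠ 0) : uP P - vP P ≤ 4 / 3 * normInv P ^ 2 := by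
  have hx := normInv_sq_le hP
  rw [uP_sub_vP hP]
  exact neg_log_one_sub_le_mul (sq_nonneg _) (by linarith) (by linarith)

lemma hTerm_one (P : Fq[X]) : hTerm 1 P = uP P - vP P := by
  simp [hTerm, sub_eq_add_neg]

lemma hTerm_two (P : Fq[X]) : hTerm 2 P = uP P ^ 2 + vP P ^ 2 := by
  simp [hTerm]

lemma hTerm_three (P : Fq[X]) : hTerm 3 P = uP P ^ 3 - vP P ^ 3 := by
  simp [hTerm, Odd.neg_one_pow (by decide : Odd 3), sub_eq_add_neg]

lemma hTerm_pos (l : ℕ) (hP : P.natDegree ≠ 0) : 0 < hTerm l P := by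
  have hv := vP_pos P
  have huv := vP_lt_uP hP
  have hu := hv.trans huv
  obtain hl | hl := l.even_or_odd
  · rw [hTerm, hl.neg_one_pow, one_mul]
    positivity
  · rw [hTerm, hl.neg_one_pow, neg_one_mul, ← sub_eq_add_neg, sub_pos]
    exact pow_lt_pow_left₀ huv hv.le hl.pos.ne'

lemma hTerm_one_le_mul_hTerm_two (hP : P.natDegree ≠ 0) : hTerm 1 P ≤ 4 / 3 * hTerm 2 P := by
  rw [hTerm_one, hTerm_two]
  calc uP P - vP P ≤ 4 / 3 * normInv P ^ 2 := uP_sub_vP_le hP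
    _ ≤ 4 / 3 * uP P ^ 2 := by
        gcongr
        · exact (normInv_pos P).le
        · exact normInv_le_uP hP
    _ ≤ 4 / 3 * (uP P ^ 2 + vP P ^ 2) := by
        gcongr
        exact le_add_of_nonneg_right (sq_nonneg _)

lemma hTerm_three_le_mul_hTerm_two (hP : P.natDegree ≠ 0) : hTerm 3 P ≤ 1 / 2 * hTerm 2 P := by
  have hdiff : uP P - vP P ≤ 1 / 3 := by linarith [uP_sub_vP_le hP, normInv_sq_le hP]
  rw [hTerm_three, hTerm_two]
  calc uP P ^ 3 - vP P ^ 3 ≤ 3 / 2 * (uP P - vP P) * (uP P ^ 2 + vP P ^ 2) :=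
        cube_sub_cube_le (vP_lt_uP hP).le
    _ ≤ 3 / 2 * (1 / 3) * (uP P ^ 2 + vP P ^ 2) := by gcongr
    _ = 1 / 2 * (uP P ^ 2 + vP P ^ 2) := by ring

lemma hTerm_two_le_mul_normInv_sq (hP : P.natDegree ≠ 0) : hTerm 2 P ≤ 8 * normInv P ^ 2 := by
  have hv := vP_pos P
  have huv := vP_lt_uP hP
  rw [hTerm_two]
  calc uP P ^ 2 + vP P ^ 2 ≤ uP P ^ 2 + uP P ^ 2 := by gcongr
    _ = 2 * uP P ^ 2 := (two_mul _).symm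
    _ ≤ 2 * (2 * normInv P) ^ 2 := by
        gcongr
        · exact (hv.trans huv).le
        · exact uP_le_two_mul_normInv hP
    _ = 8 * normInv P ^ 2 := by ring

end Terms

section Series

variable (Fq : Type) [Field Fq] [Fintype Fq]

lemma summable_normInv_sq : Summable fun P : {P : Fq[X] // P.Monic} ↦ normInv P.1 ^ 2 := by
  have hq : (1 : ℝ) < Fintype.card Fq := by exact_mod_cast Fintype.one_lt_card
  have hratio : Nat.card Fq * ((Fintype.card Fq : ℝ)⁻¹) ^ 2 < 1 := by
    rw [Nat.card_eq_fintype_card, sq, mul_inv_cancel_left₀ (by positivity)]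
    exact inv_lt_one_of_one_lt₀ hq
  have hpow (P : Fq[X]) : normInv P ^ 2 = (((Fintype.card Fq : ℝ)⁻¹) ^ 2) ^ P.natDegree := by
    rw [normInv, ← inv_pow, pow_right_comm]
  simpa only [hpow] using summable_pow_natDegree_of_monic (R := Fq) (by positivity) hratio

lemma summable_hTerm_two :
    Summable fun P : {P : Fq[X] // P.Monic ∧ Irreducible P} ↦ hTerm 2 P.1 := by
  let toMonic : {P : Fq[X] // P.Monic ∧ Irreducible P} ↪ {P : Fq[X] // P.Monic} :=
    Subtype.impEmbedding _ _ fun _ hP ↦ hP.1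
  have hsq : Summable fun P : {P : Fq[X] // P.Monic ∧ Irreducible P} ↦ normInv P.1 ^ 2 :=
    (summable_normInv_sq Fq).comp_injective toMonic.injective |>.congr fun _ ↦ rfl
  exact .of_nonneg_of_le (fun P ↦ (hTerm_pos 2 P.2.2.natDegree_pos.ne').le)
    (fun P ↦ hTerm_two_le_mul_normInv_sq P.2.2.natDegree_pos.ne') (hsq.mul_left 8)

lemma hfun_nonneg (l : ℕ) : 0 ≤ hfun Fq l :=
  tsum_nonneg fun P ↦ (hTerm_pos l P.2.2.natDegree_pos.ne').le

lemma hfun_two_pos : 0 < hfun Fq 2 :=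
  (summable_hTerm_two Fq).tsum_pos (fun P ↦ (hTerm_pos 2 P.2.2.natDegree_pos.ne').le)
    ⟨X, monic_X, irreducible_X⟩ (hTerm_pos 2 irreducible_X.natDegree_pos.ne')

variable {Fq}

lemma hfun_le_mul_hfun_two {l : ℕ} {c : ℝ}
    (hle : ∀ P : Fq[X], P.natDegree ≠ 0 → hTerm l P ≤ c * hTerm 2 P) :
    hfun Fq l ≤ c * hfun Fq 2 := by
  have hdom : Summable fun P : {P : Fq[X] // P.Monic ∧ Irreducible P} ↦ c * hTerm 2 P.1 :=
    (summable_hTerm_two Fq).mul_left c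
  have hle' (P : {P : Fq[X] // P.Monic ∧ Irreducible P}) : hTerm l P.1 ≤ c * hTerm 2 P.1 :=
    hle P.1 P.2.2.natDegree_pos.ne'
  have hsum : Summable fun P : {P : Fq[X] // P.Monic ∧ Irreducible P} ↦ hTerm l P.1 :=
    .of_nonneg_of_le (fun P ↦ (hTerm_pos l P.2.2.natDegree_pos.ne').le) hle' hdom
  calc hfun Fq l ≤ ∑' P : {P : Fq[X] // P.Monic ∧ Irreducible P}, c * hTerm 2 P.1 :=
        hsum.tsum_le_tsum hle' hdom
    _ = c * hfun Fq 2 := tsum_mul_left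

end Series

/-- For every prime power `q` (realized as the cardinality of a finite field `Fq`),
one has `h(1) h(3) < h(2)^2`. -/
theorem hfun_one_mul_three_lt (Fq : Type) [Field Fq] [Fintype Fq] :
    hfun Fq 1 * hfun Fq 3 < hfun Fq 2 ^ 2 := by
  have h_one : hfun Fq 1 ≤ 4 / 3 * hfun Fq 2 :=
    hfun_le_mul_hfun_two fun _ ↦ hTerm_one_le_mul_hTerm_two
  have h_three : hfun Fq 3 ≤ 1 / 2 * hfun Fq 2 :=
    hfun_le_mul_hfun_two fun _ ↦ hTerm_three_le_mul_hTerm_two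
  have h_two : 0 < hfun Fq 2 := hfun_two_pos Fq
  calc hfun Fq 1 * hfun Fq 3 ≤ 4 / 3 * hfun Fq 2 * (1 / 2 * hfun Fq 2) :=
        mul_le_mul h_one h_three (hfun_nonneg Fq 3) (by positivity)
    _ = 2 / 3 * hfun Fq 2 ^ 2 := by ring
    _ < hfun Fq 2 ^ 2 := mul_lt_of_lt_one_left (pow_pos h_two 2) (by norm_num)
end

section
/- For every odd integer λ ≥ 1 there is a constant C_λ > 0, depending only on λ, such that for every prime power q one has |z(λ) − λ q^{−λ}| ≤ C_λ q^{−λ−1}, where z(λ) = ∑_P (u_P^λ − v_P^λ)/(1 + |P|^{−1}), the sum over all monic irreducible polynomials P ∈ 𝔽_q[X]. -/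
/-!
Put `x = |P|⁻¹ ∈ (0, 1/2]`. Since `u_P - v_P = -log (1 - x²) = x² + O(x⁴)` while `u_P` and `v_P` are
both `x + O(x²)`, Bernoulli's inequality squeezes the summand of `z(λ)` between
`λ x ^ (λ + 1) (1 - x) ^ λ` and `λ x ^ (λ + 1) (1 + 2x) ^ λ`, so it is
`λ x ^ (λ + 1) + O(x ^ (λ + 2))`. Summing over `P` gives `λ ζ(λ + 1) + O(ζ(λ + 2))`, where
`ζ(s) = ∑_P |P|⁻ˢ`. There are `q` monic irreducible polynomials of degree one and at most `qⁿ` of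
degree `n`, so comparison with a geometric series yields `ζ(k + 1) = q⁻ᵏ + O(q⁻²ᵏ)`.
-/

open Polynomial

section LocalTerm

variable {x : ℝ}

lemma mul_one_sub_le_log_one_add (hx : 0 ≤ x) : x * (1 - x) ≤ Real.log (1 + x) := by
  have hpos : 0 < 1 + x := by linarith
  calc x * (1 - x) ≤ x / (1 + x) := by
        rw [le_div_iff₀ hpos]
        nlinarith [pow_nonneg hx 3]
    _ = 1 - (1 + x)⁻¹ := by field_simp; ring
    _ ≤ Real.log (1 + x) := Real.one_sub_inv_le_log_of_pos hpos

lemma le_neg_log_one_sub (hx : x < 1) : x ≤ -Real.log (1 - x) := by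
  linarith [Real.log_le_sub_one_of_pos (sub_pos.2 hx)]

lemma neg_log_one_sub_le (hx : x ≤ 1 / 2) : -Real.log (1 - x) ≤ x * (1 + 2 * x) := by
  have hpos : 0 < 1 - x := by linarith
  calc -Real.log (1 - x) ≤ (1 - x)⁻¹ - 1 := by
        linarith [Real.one_sub_inv_le_log_of_pos hpos]
    _ = x / (1 - x) := by field_simp; ring
    _ ≤ x * (1 + 2 * x) := by
        rw [div_le_iff₀ hpos]
        nlinarith [mul_nonneg (sq_nonneg x) (sub_nonneg.2 hx)]

lemma neg_log_one_sub_sub_log_one_add (hx₀ : -1 < x) (hx : x < 1) :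
    -Real.log (1 - x) - Real.log (1 + x) = -Real.log (1 - x ^ 2) := by
  rw [show 1 - x ^ 2 = (1 - x) * (1 + x) by ring,
    Real.log_mul (by linarith) (by linarith)]
  ring

lemma log_one_add_le_neg_log_one_sub (hx₀ : -1 < x) (hx : x < 1) :
    Real.log (1 + x) ≤ -Real.log (1 - x) := by
  have hsq : x ^ 2 < 1 := by nlinarith
  linarith [neg_log_one_sub_sub_log_one_add hx₀ hx, le_neg_log_one_sub hsq, sq_nonneg x]

/-- The summand `(u_P ^ l - v_P ^ l) / (1 + |P|⁻¹)` of `z(l)` as a function of `x = |P|⁻¹`. -/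
noncomputable def zTerm (l : ℕ) (x : ℝ) : ℝ :=
  ((-Real.log (1 - x)) ^ l - Real.log (1 + x) ^ l) / (1 + x)

lemma le_zTerm (l : ℕ) (hx₀ : 0 ≤ x) (hx : x < 1) :
    l * x ^ (l + 1) * (1 - x) ^ l ≤ zTerm l x := by
  obtain _ | n := l
  · simp [zTerm]
  rw [zTerm]
  set u := -Real.log (1 - x)
  set v := Real.log (1 + x)
  have hx1 : 0 ≤ 1 - x := by linarith
  have hv : x * (1 - x) ≤ v := mul_one_sub_le_log_one_add hx₀
  have hv₀ : 0 ≤ v := (mul_nonneg hx₀ hx1).trans hv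
  have hvu : v ≤ u := log_one_add_le_neg_log_one_sub (by linarith) hx
  have hsub : x ^ 2 ≤ u - v :=
    (le_neg_log_one_sub (by nlinarith)).trans_eq
      (neg_log_one_sub_sub_log_one_add (by linarith) hx).symm
  have bernoulli : v ^ (n + 1) + (n + 1 : ℕ) * v ^ n * (u - v) ≤ u ^ (n + 1) := by
    simpa using pow_add_mul_le_add_pow hv₀ (by linarith : 0 ≤ 2 * v + (u - v)) (n + 1)
  rw [le_div_iff₀ (by linarith)]
  calc (n + 1 : ℕ) * x ^ (n + 1 + 1) * (1 - x) ^ (n + 1) * (1 + x)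
      = (n + 1 : ℕ) * (x * (1 - x)) ^ n * x ^ 2 * (1 - x ^ 2) := by rw [mul_pow]; ring
    _ ≤ (n + 1 : ℕ) * (x * (1 - x)) ^ n * x ^ 2 :=
        mul_le_of_le_one_right (by positivity) (by linarith [sq_nonneg x])
    _ ≤ (n + 1 : ℕ) * v ^ n * (u - v) := by gcongr
    _ ≤ u ^ (n + 1) - v ^ (n + 1) := by linarith

lemma zTerm_le (l : ℕ) (hx₀ : 0 ≤ x) (hx : x ≤ 1 / 2) :
    zTerm l x ≤ l * x ^ (l + 1) * (1 + 2 * x) ^ l := by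
  obtain _ | n := l
  · simp [zTerm]
  rw [zTerm]
  set u := -Real.log (1 - x)
  set v := Real.log (1 + x)
  have hu : u ≤ x * (1 + 2 * x) := neg_log_one_sub_le hx
  have hv₀ : 0 ≤ v := Real.log_nonneg (by linarith)
  have hvu : v ≤ u := log_one_add_le_neg_log_one_sub (by linarith) (by linarith)
  have hu₀ : 0 ≤ u := hv₀.trans hvu
  have hsub : u - v ≤ x ^ 2 * (1 + 2 * x) := by
    have hxx : x ^ 2 ≤ x := by nlinarith
    calc u - v = -Real.log (1 - x ^ 2) :=
          neg_log_one_sub_sub_log_one_add (by linarith) (by linarith)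
      _ ≤ x ^ 2 * (1 + 2 * x ^ 2) := neg_log_one_sub_le (hxx.trans hx)
      _ ≤ x ^ 2 * (1 + 2 * x) := by gcongr
  have bernoulli : u ^ (n + 1) + (n + 1 : ℕ) * u ^ n * (v - u) ≤ v ^ (n + 1) := by
    simpa using pow_add_mul_le_add_pow hu₀ (by linarith : 0 ≤ 2 * u + (v - u)) (n + 1)
  calc (u ^ (n + 1) - v ^ (n + 1)) / (1 + x)
      ≤ u ^ (n + 1) - v ^ (n + 1) :=
        div_le_self (sub_nonneg.2 (pow_le_pow_left₀ hv₀ hvu _)) (by linarith)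
    _ ≤ (n + 1 : ℕ) * u ^ n * (u - v) := by linarith
    _ ≤ (n + 1 : ℕ) * (x * (1 + 2 * x)) ^ n * (x ^ 2 * (1 + 2 * x)) := by gcongr
    _ = (n + 1 : ℕ) * x ^ (n + 1 + 1) * (1 + 2 * x) ^ (n + 1) := by rw [mul_pow]; ring

lemma abs_pow_sub_one_le {r : ℝ} (hr₀ : 0 ≤ r) (hr : r ≤ 2) (l : ℕ) :
    |r ^ l - 1| ≤ |r - 1| * l * 2 ^ l := by
  have hmax : max |r| |1| ≤ 2 := max_le (by rwa [abs_of_nonneg hr₀]) (by norm_num)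
  calc |r ^ l - 1| = |r ^ l - 1 ^ l| := by rw [one_pow]
    _ ≤ |r - 1| * l * max |r| |1| ^ (l - 1) := abs_pow_sub_pow_le ..
    _ ≤ |r - 1| * l * 2 ^ (l - 1) := by gcongr
    _ ≤ |r - 1| * l * 2 ^ l := by gcongr <;> simp

lemma abs_zTerm_sub_le (l : ℕ) (hx₀ : 0 ≤ x) (hx : x ≤ 1 / 2) :
    |zTerm l x - l * x ^ (l + 1)| ≤ l ^ 2 * 2 ^ (l + 1) * x ^ (l + 2) := by
  have perturb {r : ℝ} (hr₀ : 0 ≤ r) (hr : r ≤ 2) (hrx : |r - 1| ≤ 2 * x) :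
      |l * x ^ (l + 1) * r ^ l - l * x ^ (l + 1)| ≤ l ^ 2 * 2 ^ (l + 1) * x ^ (l + 2) :=
    calc |l * x ^ (l + 1) * r ^ l - l * x ^ (l + 1)|
        = l * x ^ (l + 1) * |r ^ l - 1| := by
          rw [← mul_sub_one, abs_mul, abs_of_nonneg (by positivity)]
      _ ≤ l * x ^ (l + 1) * (|r - 1| * l * 2 ^ l) := by gcongr; exact abs_pow_sub_one_le hr₀ hr l
      _ ≤ l * x ^ (l + 1) * (2 * x * l * 2 ^ l) := by gcongr
      _ = l ^ 2 * 2 ^ (l + 1) * x ^ (l + 2) := by ring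
  have below := perturb (r := 1 - x) (by linarith) (by linarith)
    (abs_le.2 ⟨by linarith, by linarith⟩)
  have above := perturb (r := 1 + 2 * x) (by linarith) (by linarith)
    (abs_le.2 ⟨by linarith, by linarith⟩)
  rw [abs_le] at below above ⊢
  exact ⟨by linarith [below.1, le_zTerm l hx₀ (by linarith)],
    by linarith [above.2, zTerm_le l hx₀ hx]⟩

end LocalTerm

lemma hasSum_comp_of_finite_fibers {ι β : Type*} {d : ι → β} (hd : ∀ b, Finite {i // d i = b})
    {f : β → ℝ} (hf : ∀ b, 0 ≤ f b) {a : ℝ}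
    (h : HasSum (fun b ↦ Nat.card {i // d i = b} * f b) a) : HasSum (fun i ↦ f (d i)) a := by
  have hfiber (b : β) :
      HasSum (fun i : {i // d i = b} ↦ f (d i)) (Nat.card {i // d i = b} * f b) := by
    have := Fintype.ofFinite {i // d i = b}
    have hconst (i : {i // d i = b}) : f (d i) = f b := by rw [i.2]
    simpa [hconst] using hasSum_fintype fun i : {i // d i = b} ↦ f (d i)
  rw [← (Equiv.sigmaFiberEquiv d).hasSum_iff]
  have hsummable : Summable fun p : Σ b, {i // d i = b} ↦ f (d p.2) := by
    rw [summable_sigma_of_nonneg fun p ↦ hf _]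
    exact ⟨fun b ↦ (hfiber b).summable, by simpa only [(hfiber _).tsum_eq] using h.summable⟩
  exact hsummable.hasSum_iff.2 ((hsummable.hasSum.sigma hfiber).unique h)

section Monic

variable (R : Type*) [Ring R] [Nontrivial R] (n : ℕ)

/-- A monic polynomial of degree `n` is determined by its `n` lower coefficients, which are
arbitrary. -/
noncomputable def monicEquivLowerCoeffs :
    {p : R[X] // p.Monic ∧ p.natDegree = n} ≃ (Fin n → R) :=
  (monicEquivDegreeLT n).trans (degreeLTEquiv R n).toEquiv

lemma finite_monic_natDegree_eq [Finite R] :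
    Finite {p : R[X] // p.Monic ∧ p.natDegree = n} :=
  Finite.of_equiv _ (monicEquivLowerCoeffs R n).symm

lemma card_monic_natDegree_eq :
    Nat.card {p : R[X] // p.Monic ∧ p.natDegree = n} = Nat.card R ^ n := by
  rw [Nat.card_congr (monicEquivLowerCoeffs R n), Nat.card_fun, Nat.card_fin]

end Monic

lemma inv_card_pow_le_half {α : Type*} [Fintype α] [Nontrivial α] {k : ℕ} (hk : k ≠ 0) :
    ((Fintype.card α : ℝ) ^ k)⁻¹ ≤ 1 / 2 := by
  have hq : (2 : ℝ) ≤ Fintype.card α := mod_cast Fintype.one_lt_card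
  rw [one_div]
  exact inv_anti₀ two_pos (hq.trans (le_self_pow₀ (by linarith) hk))

section PrimeZeta

/-- The primes of `F[X]`, each represented by its monic generator. -/
abbrev MonicIrreducible (F : Type*) [Field F] : Type _ :=
  {P : F[X] // P.Monic ∧ Irreducible P}

variable (F : Type*) [Field F]

/-- The number of monic irreducible polynomials of degree `n` over `F`. -/
noncomputable def monicIrreducibleCount (n : ℕ) : ℕ :=
  Nat.card {P : MonicIrreducible F // P.1.natDegree = n}

lemma monicIrreducibleCount_zero : monicIrreducibleCount F 0 = 0 := by
  have : IsEmpty {P : MonicIrreducible F // P.1.natDegree = 0} :=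
    ⟨fun P ↦ P.1.2.2.natDegree_pos.ne' P.2⟩
  exact Nat.card_of_isEmpty

lemma monicIrreducibleCount_one : monicIrreducibleCount F 1 = Nat.card F := by
  have hiff (P : F[X]) :
      (P.Monic ∧ Irreducible P) ∧ P.natDegree = 1 ↔ P.Monic ∧ P.natDegree = 1 :=
    ⟨fun h ↦ ⟨h.1.1, h.2⟩, fun h ↦
      ⟨⟨h.1, irreducible_of_degree_eq_one ((degree_eq_iff_natDegree_eq_of_pos one_pos).2 h.2)⟩,
        h.2⟩⟩
  have e : {P : MonicIrreducible F // P.1.natDegree = 1} ≃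
      {P : F[X] // P.Monic ∧ P.natDegree = 1} :=
    (Equiv.subtypeSubtypeEquivSubtypeInter _ fun P : F[X] ↦ P.natDegree = 1).trans
      (Equiv.subtypeEquivRight hiff)
  rw [monicIrreducibleCount, Nat.card_congr e, card_monic_natDegree_eq, pow_one]

/-- The inclusion of the monic irreducible polynomials of degree `n` into the monic ones. -/
def monicIrreducibleEmbedding (n : ℕ) :
    {P : MonicIrreducible F // P.1.natDegree = n} ↪ {P : F[X] // P.Monic ∧ P.natDegree = n} where
  toFun P := ⟨P.1.1, P.1.2.1, P.2⟩
  inj' _ _ h := Subtype.ext (Subtype.ext (Subtype.mk.inj h))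

lemma finite_monicIrreducible_natDegree_eq [Finite F] (n : ℕ) :
    Finite {P : MonicIrreducible F // P.1.natDegree = n} :=
  have := finite_monic_natDegree_eq F n
  Finite.of_injective _ (monicIrreducibleEmbedding F n).injective

lemma monicIrreducibleCount_le [Finite F] (n : ℕ) :
    monicIrreducibleCount F n ≤ Nat.card F ^ n := by
  have := finite_monic_natDegree_eq F n
  rw [← card_monic_natDegree_eq]
  exact Nat.card_le_card_of_injective _ (monicIrreducibleEmbedding F n).injective

variable [Fintype F]

variable {F} in
/-- `|P|⁻¹`, where `|P| = q ^ deg P` is the norm of `P` over a field with `q` elements. -/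
noncomputable def invNorm (P : F[X]) : ℝ := ((Fintype.card F : ℝ) ^ P.natDegree)⁻¹

/-- The prime zeta function `s ↦ ∑_P |P|⁻ˢ` of `F[X]` at natural numbers `s`; the series converges
for `2 ≤ s`, and `primeZeta F s` is a junk value for smaller `s`. -/
noncomputable def primeZeta (s : ℕ) : ℝ := ∑' P : MonicIrreducible F, invNorm P.1 ^ s

variable {F}

lemma invNorm_nonneg (P : F[X]) : 0 ≤ invNorm P :=
  inv_nonneg.2 (by positivity)

lemma MonicIrreducible.invNorm_le_half (P : MonicIrreducible F) : invNorm P.1 ≤ 1 / 2 :=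
  inv_card_pow_le_half P.2.2.natDegree_pos.ne'

variable (F)

lemma norm_monicIrreducibleCount_mul_le (k n : ℕ) :
    ‖monicIrreducibleCount F n * ((Fintype.card F : ℝ) ^ n)⁻¹ ^ (k + 1)‖
      ≤ ((Fintype.card F : ℝ) ^ k)⁻¹ ^ n := by
  have hq : (Fintype.card F : ℝ) ≠ 0 := Nat.cast_ne_zero.2 Fintype.card_ne_zero
  have hcount : (monicIrreducibleCount F n : ℝ) ≤ (Fintype.card F : ℝ) ^ n :=
    mod_cast Nat.card_eq_fintype_card (α := F) ▸ monicIrreducibleCount_le F n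
  rw [Real.norm_of_nonneg (by positivity)]
  calc monicIrreducibleCount F n * ((Fintype.card F : ℝ) ^ n)⁻¹ ^ (k + 1)
      ≤ (Fintype.card F : ℝ) ^ n * ((Fintype.card F : ℝ) ^ n)⁻¹ ^ (k + 1) := by gcongr
    _ = ((Fintype.card F : ℝ) ^ k)⁻¹ ^ n := by
      rw [pow_succ', mul_inv_cancel_left₀ (pow_ne_zero n hq), inv_pow, inv_pow, pow_right_comm]

variable {k : ℕ}

lemma summable_monicIrreducibleCount_mul (hk : k ≠ 0) :
    Summable fun n ↦ monicIrreducibleCount F n * ((Fintype.card F : ℝ) ^ n)⁻¹ ^ (k + 1) := by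
  have hr : ((Fintype.card F : ℝ) ^ k)⁻¹ < 1 := (inv_card_pow_le_half hk).trans_lt (by norm_num)
  exact (summable_geometric_of_lt_one (by positivity) hr).of_norm_bounded
    (norm_monicIrreducibleCount_mul_le F k)

lemma hasSum_invNorm_pow (hk : k ≠ 0) :
    HasSum (fun P : MonicIrreducible F ↦ invNorm P.1 ^ (k + 1))
      (∑' n, monicIrreducibleCount F n * ((Fintype.card F : ℝ) ^ n)⁻¹ ^ (k + 1)) :=
  hasSum_comp_of_finite_fibers (finite_monicIrreducible_natDegree_eq F)
    (f := fun n ↦ ((Fintype.card F : ℝ) ^ n)⁻¹ ^ (k + 1)) (fun n ↦ by positivity)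
    (summable_monicIrreducibleCount_mul F hk).hasSum

lemma hasSum_primeZeta (hk : k ≠ 0) :
    HasSum (fun P : MonicIrreducible F ↦ invNorm P.1 ^ (k + 1)) (primeZeta F (k + 1)) :=
  (hasSum_invNorm_pow F hk).summable.hasSum

lemma abs_primeZeta_sub_le (hk : k ≠ 0) :
    |primeZeta F (k + 1) - ((Fintype.card F : ℝ) ^ k)⁻¹|
      ≤ 2 * ((Fintype.card F : ℝ) ^ k)⁻¹ ^ 2 := by
  set r := ((Fintype.card F : ℝ) ^ k)⁻¹
  have hr : r ≤ 1 / 2 := inv_card_pow_le_half hk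
  have hq : (Fintype.card F : ℝ) ≠ 0 := Nat.cast_ne_zero.2 Fintype.card_ne_zero
  have htail := norm_sub_le_of_geometric_bound_of_hasSum (by linarith)
    (fun n ↦ (norm_monicIrreducibleCount_mul_le F k n).trans_eq (one_mul _).symm)
    (summable_monicIrreducibleCount_mul F hk).hasSum 2
  have hdegree_le_one : ∑ n ∈ Finset.range 2,
      monicIrreducibleCount F n * ((Fintype.card F : ℝ) ^ n)⁻¹ ^ (k + 1) = r := by
    rw [Finset.sum_range_succ, Finset.sum_range_one, monicIrreducibleCount_zero,
      monicIrreducibleCount_one, Nat.card_eq_fintype_card, Nat.cast_zero, zero_mul, zero_add,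
      pow_one, pow_succ', mul_inv_cancel_left₀ hq, inv_pow]
  rw [primeZeta, (hasSum_invNorm_pow F hk).tsum_eq, abs_sub_comm]
  rw [hdegree_le_one, Real.norm_eq_abs] at htail
  refine htail.trans ?_
  rw [one_mul, div_le_iff₀ (by linarith)]
  nlinarith [sq_nonneg r]

lemma primeZeta_le (hk : k ≠ 0) :
    primeZeta F (k + 1) ≤ 2 * ((Fintype.card F : ℝ) ^ k)⁻¹ := by
  have hr : ((Fintype.card F : ℝ) ^ k)⁻¹ ≤ 1 / 2 := inv_card_pow_le_half hk
  have hr₀ : 0 ≤ ((Fintype.card F : ℝ) ^ k)⁻¹ := by positivity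
  nlinarith [(abs_le.1 (abs_primeZeta_sub_le F hk)).2]

end PrimeZeta

section SumOfTerms

variable (F : Type*) [Field F] [Fintype F] (l : ℕ)

lemma norm_zTerm_invNorm_sub_le (P : MonicIrreducible F) :
    ‖zTerm l (invNorm P.1) - l * invNorm P.1 ^ (l + 1)‖
      ≤ l ^ 2 * 2 ^ (l + 1) * invNorm P.1 ^ (l + 2) :=
  abs_zTerm_sub_le l (invNorm_nonneg P.1) P.invNorm_le_half

variable {l}

lemma summable_zTerm_invNorm (hl : l ≠ 0) :
    Summable fun P : MonicIrreducible F ↦ zTerm l (invNorm P.1) := by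
  have hmain := (hasSum_primeZeta F hl).summable.mul_left (l : ℝ)
  have herror := (hasSum_primeZeta F l.succ_ne_zero).summable.mul_left (l ^ 2 * 2 ^ (l + 1) : ℝ)
  simpa only [sub_add_cancel] using
    (herror.of_norm_bounded (norm_zTerm_invNorm_sub_le F l)).add hmain

lemma abs_tsum_zTerm_sub_primeZeta_le (hl : l ≠ 0) :
    |(∑' P : MonicIrreducible F, zTerm l (invNorm P.1)) - l * primeZeta F (l + 1)|
      ≤ l ^ 2 * 2 ^ (l + 1) * primeZeta F (l + 2) := by
  have hmain := (hasSum_primeZeta F hl).mul_left (l : ℝ)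
  have herror := (hasSum_primeZeta F l.succ_ne_zero).mul_left (l ^ 2 * 2 ^ (l + 1) : ℝ)
  rw [← hmain.tsum_eq, ← (summable_zTerm_invNorm F hl).tsum_sub hmain.summable]
  exact tsum_of_norm_bounded herror (norm_zTerm_invNorm_sub_le F l)

lemma abs_tsum_zTerm_sub_le (hl : l ≠ 0) :
    |(∑' P : MonicIrreducible F, zTerm l (invNorm P.1)) - l * ((Fintype.card F : ℝ) ^ l)⁻¹|
      ≤ (l ^ 2 * 2 ^ (l + 2) + 2 * l) * ((Fintype.card F : ℝ) ^ (l + 1))⁻¹ := by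
  set r := ((Fintype.card F : ℝ) ^ (l + 1))⁻¹
  have hsq : ((Fintype.card F : ℝ) ^ l)⁻¹ ^ 2 ≤ r := by
    rw [inv_pow, ← pow_mul]
    exact inv_anti₀ (by positivity)
      (pow_le_pow_right₀ (mod_cast Fintype.card_pos) (by lia))
  have hmain : |l * primeZeta F (l + 1) - l * ((Fintype.card F : ℝ) ^ l)⁻¹| ≤ l * (2 * r) := by
    rw [← mul_sub, abs_mul, Nat.abs_cast]
    gcongr
    exact (abs_primeZeta_sub_le F hl).trans (by gcongr)
  calc |(∑' P : MonicIrreducible F, zTerm l (invNorm P.1)) - l * ((Fintype.card F : ℝ) ^ l)⁻¹|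
      ≤ l ^ 2 * 2 ^ (l + 1) * primeZeta F (l + 2) + l * (2 * r) :=
        (abs_sub_le _ _ _).trans (add_le_add (abs_tsum_zTerm_sub_primeZeta_le F hl) hmain)
    _ ≤ l ^ 2 * 2 ^ (l + 1) * (2 * r) + l * (2 * r) := by
        gcongr
        exact primeZeta_le F l.succ_ne_zero
    _ = (l ^ 2 * 2 ^ (l + 2) + 2 * l) * r := by ring

end SumOfTerms

theorem z_odd_asymptotic_general (l : ℕ) :
    ∃ C : ℝ, 0 < C ∧
      ∀ (Fq : Type) [Field Fq] [Fintype Fq],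
        |(∑' P : {P : Polynomial Fq // P.Monic ∧ Irreducible P},
            (uP P.1 ^ l - vP P.1 ^ l) /
              (1 + ((Fintype.card Fq : ℝ) ^ P.1.natDegree)⁻¹))
          - (l : ℝ) * ((Fintype.card Fq : ℝ) ^ l)⁻¹|
        ≤ C * ((Fintype.card Fq : ℝ) ^ (l + 1))⁻¹ := by
  obtain rfl | hl := eq_or_ne l 0
  · exact ⟨1, one_pos, fun Fq _ _ ↦ by simp⟩
  · exact ⟨l ^ 2 * 2 ^ (l + 2) + 2 * l, by positivity, fun Fq _ _ ↦ abs_tsum_zTerm_sub_le Fq hl⟩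

/-- For every odd integer `λ ≥ 1` there is a constant `C_λ > 0` such that for every
prime power `q` (realized as the cardinality of a finite field `Fq`) one has
`|z(λ) - λ q^(-λ)| ≤ C_λ q^(-λ-1)`, where
`z(λ) = ∑_P (u_P^λ - v_P^λ)/(1 + |P|⁻¹)`, the sum over all monic irreducible
polynomials `P ∈ Fq[X]`. -/
theorem z_odd_asymptotic (l : ℕ) (hl : 1 ≤ l) (hodd : Odd l) :
    ∃ C : ℝ, 0 < C ∧
      ∀ (Fq : Type) [Field Fq] [Fintype Fq],
        |(∑' P : {P : Polynomial Fq // P.Monic ∧ Irreducible P},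
            (uP P.1 ^ l - vP P.1 ^ l) /
              (1 + ((Fintype.card Fq : ℝ) ^ P.1.natDegree)⁻¹))
          - (l : ℝ) * ((Fintype.card Fq : ℝ) ^ l)⁻¹|
        ≤ C * ((Fintype.card Fq : ℝ) ^ (l + 1))⁻¹ :=
  z_odd_asymptotic_general l
end
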